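/- arXiv:1505.04602 — 2 statements merged into one kernel-verified Lean document; each statement's English description precedes it below -/
import Mathlib

section
/- Let n ≥ 2, let G be a connected simple graph on Fin n, and let S be a subset of the edge set of G. Then the spanning subgraph of G on the vertex set Fin n whose edge set is S is a spanning tree of G (i.e., it is connected and acyclic) if and only if the family (χ(e))_{e ∈ S} is a basis of the vector space (Fin (n-1) → ZMod 2) over ZMod 2. -/
/-- The coding vector of an unordered pair of vertices of `Fin n`:
for `e = {i,j}` with `i < j`, coordinate `k` is `1` iff `i ≤ k < j`. -/
def chi (n : ℕ) : Sym2 (Fin n) → (Fin (n - 1) → ZMod 2) :=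
  Sym2.lift ⟨fun i j k => if min i.val j.val ≤ k.val ∧ k.val < max i.val j.val then 1 else 0,
    fun i j => by funext k; dsimp only; rw [min_comm, max_comm]⟩

/-- `Cseg N` is the set of nonzero vectors of `Fin N → ZMod 2` whose support is an
interval of consecutive indices (the consecutive 1's property). -/
def Cseg (N : ℕ) : Set (Fin N → ZMod 2) :=
  {v | v ≠ 0 ∧ ∃ a b : ℕ, ∀ k : Fin N, v k = 1 ↔ a ≤ k.val ∧ k.val < b}

/-- A finite set of vectors is reduced if it is nonempty and every nonempty proper
subset has nonzero sum. -/
def IsReducedSet {N : ℕ} (S : Finset (Fin N → ZMod 2)) : Prop :=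
  S.Nonempty ∧ ∀ A : Finset (Fin N → ZMod 2), A ⊂ S → A.Nonempty → ∑ v ∈ A, v ≠ 0

/-- Prefix vector. -/
def pvec (n : ℕ) (i : ℕ) : Fin (n - 1) → ZMod 2 := fun k => if k.val < i then 1 else 0

theorem chi_eq_pvec (n : ℕ) (i j : Fin n) : chi n s(i, j) = pvec n i + pvec n j := by
  funext k
  have h2 : (1 : ZMod 2) + 1 = 0 := by decide
  simp only [chi, pvec, Sym2.lift_mk, Pi.add_apply]
  split_ifs <;> first | (simp [h2]; done) | omega

theorem pvec_add_self (n i : ℕ) : pvec n i + pvec n i = 0 := by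
  funext k
  exact CharTwo.add_self_eq_zero _

theorem pvec_succ (n : ℕ) (k : Fin (n - 1)) :
    pvec n k.val + pvec n (k.val + 1) = Pi.single k 1 := by
  funext l
  have h2 : (1 : ZMod 2) + 1 = 0 := by decide
  by_cases h : l = k
  · subst h; simp [pvec]
  · have h' : l.val ≠ k.val := fun e => h (Fin.ext e)
    simp only [pvec, Pi.add_apply, Pi.single_apply, h, if_false]
    split_ifs <;> first | (simp [h2]; done) | omega

theorem walk_mem (n : ℕ) (S : Set (Sym2 (Fin n))) {u v : Fin n}
    (w : (SimpleGraph.fromEdgeSet S).Walk u v) :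
    pvec n u + pvec n v ∈ Submodule.span (ZMod 2) (Set.range fun e : S => chi n e.val) := by
  induction w with
  | nil => rw [pvec_add_self]; exact Submodule.zero_mem _
  | @cons a b c h w ih =>
    have hab : s(a, b) ∈ S := ((SimpleGraph.fromEdgeSet_adj S).1 h).1
    have h1 : chi n s(a, b) ∈ Submodule.span (ZMod 2) (Set.range fun e : S => chi n e.val) :=
      Submodule.subset_span ⟨⟨_, hab⟩, rfl⟩
    rw [chi_eq_pvec] at h1
    have h3 := Submodule.add_mem _ h1 ih
    have h4 : pvec n a + pvec n b + (pvec n b + pvec n c) = pvec n a + pvec n c := by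
      rw [add_assoc, ← add_assoc (pvec n b), pvec_add_self, zero_add]
    rwa [h4] at h3

theorem span_of_connected (n : ℕ) (S : Set (Sym2 (Fin n)))
    (h : (SimpleGraph.fromEdgeSet S).Connected) :
    Submodule.span (ZMod 2) (Set.range fun e : S => chi n e.val) = ⊤ := by
  rw [eq_top_iff, ← (Pi.basisFun (ZMod 2) (Fin (n - 1))).span_eq, Submodule.span_le]
  rintro _ ⟨k, rfl⟩
  obtain ⟨w⟩ := h.preconnected (⟨k.val, by omega⟩ : Fin n) ⟨k.val + 1, by omega⟩
  have := walk_mem n S w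
  rw [Pi.basisFun_apply, ← pvec_succ]
  exact this

theorem tele (n : ℕ) (g : ℕ → ZMod 2) (i : ℕ) (hi : i ≤ n - 1) :
    ∑ k : Fin (n - 1), pvec n i k * (g k.val + g (k.val + 1)) = g 0 + g i := by
  induction i with
  | zero => simp [pvec, CharTwo.add_self_eq_zero]
  | succ i ih =>
    have e := pvec_succ n ⟨i, hi⟩
    have e2 : pvec n (i + 1) = pvec n i + Pi.single (⟨i, hi⟩ : Fin (n - 1)) 1 := by
      rw [← e, ← add_assoc, pvec_add_self, zero_add]
    rw [e2]
    simp only [Pi.add_apply, add_mul, Finset.sum_add_distrib]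
    rw [ih (by omega)]
    simp only [Pi.single_apply, ite_mul, one_mul, zero_mul, Finset.sum_ite_eq', Finset.mem_univ,
      if_true]
    rw [← add_assoc, add_assoc (g 0), CharTwo.add_self_eq_zero, add_zero]

theorem connected_of_span (n : ℕ) (hn : 2 ≤ n) (S : Set (Sym2 (Fin n)))
    (hne : ∀ e ∈ S, ¬ e.IsDiag)
    (h : Submodule.span (ZMod 2) (Set.range fun e : S => chi n e.val) = ⊤) :
    (SimpleGraph.fromEdgeSet S).Connected := by
  classical
  let o : Fin n := ⟨0, by omega⟩
  let g : ℕ → ZMod 2 := fun m =>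
    if ∃ hm : m < n, (SimpleGraph.fromEdgeSet S).Reachable o ⟨m, hm⟩ then 1 else 0
  let φ : (Fin (n - 1) → ZMod 2) →ₗ[ZMod 2] ZMod 2 :=
    Fintype.linearCombination (ZMod 2) (fun k : Fin (n - 1) => g k.val + g (k.val + 1))
  have hφp : ∀ i : ℕ, i ≤ n - 1 → φ (pvec n i) = g 0 + g i := by
    intro i hi
    rw [← tele n g i hi]
    simp [φ, Fintype.linearCombination_apply]
  have hφ : φ = 0 := by
    rw [← LinearMap.ker_eq_top, eq_top_iff, ← h, Submodule.span_le]
    rintro _ ⟨⟨e, he⟩, rfl⟩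
    induction e with
    | _ i j =>
    have hij : (SimpleGraph.fromEdgeSet S).Adj i j :=
      (SimpleGraph.fromEdgeSet_adj S).2 ⟨he, fun h => hne _ he (by simpa using h)⟩
    have hg : g i = g j := by
      have : (∃ hm : i.val < n, (SimpleGraph.fromEdgeSet S).Reachable o ⟨i.val, hm⟩) ↔
          (∃ hm : j.val < n, (SimpleGraph.fromEdgeSet S).Reachable o ⟨j.val, hm⟩) :=
        ⟨fun ⟨_, r⟩ => ⟨j.2, r.trans hij.reachable⟩,
          fun ⟨_, r⟩ => ⟨i.2, r.trans hij.symm.reachable⟩⟩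
      simp only [g, this]
    change φ (chi n s(i, j)) = 0
    rw [chi_eq_pvec, map_add, hφp _ (by omega), hφp _ (by omega), hg]
    exact CharTwo.add_self_eq_zero _
  have hg0 : g 0 = 1 := if_pos ⟨by omega, SimpleGraph.Reachable.refl _⟩
  have hr : ∀ v : Fin n, (SimpleGraph.fromEdgeSet S).Reachable o v := by
    intro v
    have h1 := hφp v (by omega)
    rw [hφ, LinearMap.zero_apply, hg0] at h1
    by_contra hc
    have : g v = 0 := if_neg (fun ⟨_, r⟩ => hc r)
    rw [this] at h1
    exact absurd h1 (by decide)
  have : Nonempty (Fin n) := ⟨o⟩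
  exact ⟨fun u v => (hr u).symm.trans (hr v)⟩

theorem stmt8 (n : ℕ) (hn : 2 ≤ n) (G : SimpleGraph (Fin n)) (hG : G.Connected)
    (S : Set (Sym2 (Fin n))) (hS : S ⊆ G.edgeSet) :
    ((SimpleGraph.fromEdgeSet S).Connected ∧ (SimpleGraph.fromEdgeSet S).IsAcyclic) ↔
      (LinearIndependent (ZMod 2) (fun e : S => chi n e.val) ∧
        Submodule.span (ZMod 2) (Set.range fun e : S => chi n e.val) = ⊤) := by
  classical
  have hne : ∀ e ∈ S, ¬ e.IsDiag := fun e he => G.not_isDiag_of_mem_edgeSet (hS he)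
  have hE : (SimpleGraph.fromEdgeSet S).edgeSet = S := by
    rw [SimpleGraph.edgeSet_fromEdgeSet]
    ext e
    exact ⟨fun h => h.1, fun h => ⟨h, hne e h⟩⟩
  have hT := SimpleGraph.isTree_iff_connected_and_card (G := SimpleGraph.fromEdgeSet S)
  rw [SimpleGraph.isTree_iff, hE, Nat.card_eq_fintype_card, Nat.card_eq_fintype_card,
    Fintype.card_fin] at hT
  rw [hT]
  constructor
  · rintro ⟨hc, hcard⟩
    have hs := span_of_connected n S hc
    refine ⟨linearIndependent_of_top_le_span_of_card_eq_finrank hs.ge ?_, hs⟩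
    rw [Module.finrank_fin_fun]; omega
  · rintro ⟨hl, hs⟩
    refine ⟨connected_of_span n hn S hne hs, ?_⟩
    have := Module.finrank_eq_card_basis (Module.Basis.mk hl hs.ge)
    rw [Module.finrank_fin_fun] at this
    omega
end

section
/- Let n ≥ 2 and let a = {i,j} and b = {r,s} be two distinct unordered pairs of distinct vertices in Fin n. Then χ(a) + χ(b) ∈ C(n-1) if and only if the intersection {i,j} ∩ {r,s} has exactly one element; moreover, in that case χ(a) + χ(b) = χ({x,y}), where {x,y} is the symmetric difference of {i,j} and {r,s}. -/
theorem chi_eq_one_iff (n : ℕ) (i j : Fin n) (k : Fin (n - 1)) :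
    chi n s(i, j) k = if min i.val j.val ≤ k.val ∧ k.val < max i.val j.val then 1 else 0 := rfl

theorem chi_add_common (n : ℕ) (c x y : Fin n) :
    chi n s(c, x) + chi n s(c, y) = chi n s(x, y) := by
  funext k
  rw [Pi.add_apply, chi_eq_one_iff, chi_eq_one_iff, chi_eq_one_iff]
  have h2 : (1 : ZMod 2) + 1 = 0 := by decide
  split_ifs <;> first | (exfalso; omega) | simp [h2]

theorem chi_mem_Cseg (n : ℕ) (x y : Fin n) (h : x ≠ y) : chi n s(x, y) ∈ Cseg (n - 1) := by
  have hv : x.val ≠ y.val := fun e => h (Fin.ext e)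
  refine ⟨fun h0 => ?_, min x.val y.val, max x.val y.val, fun k => ?_⟩
  · have hk : min x.val y.val < n - 1 := by omega
    have h1 := congrFun h0 ⟨min x.val y.val, hk⟩
    rw [chi_eq_one_iff, if_pos (by simp only; omega)] at h1
    simp at h1
  · rw [chi_eq_one_iff]
    split_ifs with hc
    · simp only [hc, true_iff, and_self]
    · simp only [hc, iff_false]
      decide

theorem no_interval (n i j r s a b : ℕ) (hi : i < n) (hj : j < n) (hr : r < n) (hs : s < n)
    (hij : i < j) (hrs : r < s) (h1 : i < r) (h2 : j ≠ r) (h4 : j ≠ s)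
    (h : ∀ k, k < n - 1 → (¬ ((i ≤ k ∧ k < j) ↔ (r ≤ k ∧ k < s)) ↔ a ≤ k ∧ k < b)) : False := by
  have e1 := h i
  have e2 := h j
  have e3 := h r
  have e4 := h s
  rcases lt_or_gt_of_ne h2 with g | g
  · have := e1 (by omega)
    have := e2 (by omega)
    have := e3 (by omega)
    omega
  · rcases lt_or_gt_of_ne h4 with g' | g'
    · have := e1 (by omega)
      have := e3 (by omega)
      have := e2 (by omega)
      omega
    · have := e1 (by omega)
      have := e3 (by omega)
      have := e4 (by omega)
      omega

theorem exists_common (n : ℕ) (i j r s : Fin n) (hij : i ≠ j) (hrs : r ≠ s)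
    (h : chi n s(i, j) + chi n s(r, s) ∈ Cseg (n - 1)) :
    i = r ∨ i = s ∨ j = r ∨ j = s := by
  by_contra hc
  simp only [not_or, Fin.ext_iff] at hc
  obtain ⟨-, a, b, hk⟩ := h
  have hij' : i.val ≠ j.val := fun e => hij (Fin.ext e)
  have hrs' : r.val ≠ s.val := fun e => hrs (Fin.ext e)
  have key : ∀ k, k < n - 1 → (¬ ((min i.val j.val ≤ k ∧ k < max i.val j.val) ↔
      (min r.val s.val ≤ k ∧ k < max r.val s.val)) ↔ a ≤ k ∧ k < b) := by
    intro k hlt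
    rw [← hk ⟨k, hlt⟩, Pi.add_apply, chi_eq_one_iff, chi_eq_one_iff]
    have h2 : (1 : ZMod 2) + 1 = 0 := by decide
    simp only
    split_ifs with p q q <;> simp only [p, q] <;> simp [h2]
  rcases lt_or_ge (min i.val j.val) (min r.val s.val) with g | g
  · exact no_interval n _ _ _ _ a b (by omega) (by omega) (by omega) (by omega) (by omega)
      (by omega) g (by omega) (by omega) key
  · refine no_interval n (min r.val s.val) (max r.val s.val) (min i.val j.val)
      (max i.val j.val) a b (by omega) (by omega) (by omega) (by omega) (by omega)
      (by omega) (show min r.val s.val < min i.val j.val by omega) (by omega) (by omega)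
      (fun k hlt => ?_)
    rw [← key k hlt]
    exact not_congr Iff.comm

theorem common_case (n : ℕ) (c u w : Fin n) (h1 : c ≠ u) (h2 : c ≠ w) (h3 : u ≠ w) :
    ((chi n s(c, u) + chi n s(c, w) ∈ Cseg (n - 1)) ↔
        (({c, u} ∩ {c, w} : Finset (Fin n)).card = 1)) ∧
      (({c, u} ∩ {c, w} : Finset (Fin n)).card = 1 →
        ∀ x y : Fin n, ({x, y} : Finset (Fin n)) = symmDiff ({c, u} : Finset (Fin n)) {c, w} →
          chi n s(c, u) + chi n s(c, w) = chi n s(x, y)) := by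
  rw [chi_add_common]
  have hI : ({c, u} ∩ {c, w} : Finset (Fin n)) = {c} := by
    ext z
    simp only [Finset.mem_inter, Finset.mem_insert, Finset.mem_singleton]
    grind
  refine ⟨⟨fun _ => by rw [hI]; simp, fun _ => chi_mem_Cseg n u w h3⟩, fun _ x y hxy => ?_⟩
  have hm : ∀ z, (z = x ∨ z = y) ↔ (z = u ∨ z = w) := by
    intro z
    have := Finset.ext_iff.1 hxy z
    simp only [Finset.mem_symmDiff, Finset.mem_insert, Finset.mem_singleton] at this
    grind
  congr 1
  rw [Sym2.eq_iff]
  have a1 := hm x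
  have a2 := hm y
  have a3 := hm u
  have a4 := hm w
  grind

theorem stmt16 (n : ℕ) (hn : 2 ≤ n) (i j r s : Fin n)
    (hij : i ≠ j) (hrs : r ≠ s) (hab : s(i, j) ≠ s(r, s)) :
    ((chi n s(i, j) + chi n s(r, s) ∈ Cseg (n - 1)) ↔
        (({i, j} ∩ {r, s} : Finset (Fin n)).card = 1)) ∧
      (({i, j} ∩ {r, s} : Finset (Fin n)).card = 1 →
        ∀ x y : Fin n, ({x, y} : Finset (Fin n)) = symmDiff ({i, j} : Finset (Fin n)) {r, s} →
          chi n s(i, j) + chi n s(r, s) = chi n s(x, y)) := by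
  by_cases hc : i = r ∨ i = s ∨ j = r ∨ j = s
  · rw [Ne, Sym2.eq_iff] at hab
    rcases hc with rfl | rfl | rfl | rfl
    · exact common_case n i j s hij hrs (by grind)
    · rw [Sym2.eq_swap (a := r), Finset.pair_comm r]
      exact common_case n i j r hij hrs.symm (by grind)
    · rw [Sym2.eq_swap (a := i), Finset.pair_comm i]
      exact common_case n j i s hij.symm hrs (by grind)
    · rw [Sym2.eq_swap (a := i), Finset.pair_comm i, Sym2.eq_swap (a := r), Finset.pair_comm r]
      exact common_case n j i r hij.symm hrs.symm (by grind)
  · have hI : ({i, j} ∩ {r, s} : Finset (Fin n)) = ∅ := by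
      ext z
      simp only [Finset.mem_inter, Finset.mem_insert, Finset.mem_singleton, Finset.notMem_empty]
      grind
    rw [hI]
    refine ⟨⟨fun h => absurd (exists_common n i j r s hij hrs h) hc, fun h => ?_⟩, fun h => ?_⟩
    · simp at h
    · simp at h
end
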